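/- For every ε > 0, the set F_o is open in GL_n(ℝ), and the closure F̄ of F is contained in F_o. -/

import Mathlib

noncomputable section

/-- `M_n(ℝ)`, the `n × n` real matrices, identified with `ℝ^{n²}`. -/
abbrev Mn (n : ℕ) : Type := Matrix (Fin n) (Fin n) ℝ

/-- The tile `F ⊆ GL_n(ℝ)`: matrices `s • (k * w * y)` with `s ∈ [1,2)`,
`k` orthogonal, `w = diag(w₁, …, w_{n-1}, (w₁⋯w_{n-1})⁻¹)` with each `w_i ∈ [1,2)`,
and `y` unit upper triangular with strict upper entries in `[0,1)`. -/
def Fset (n : ℕ) : Set (Mn n) :=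
  {a | ∃ (s : ℝ) (k : Mn n) (wd : Fin n → ℝ) (y : Mn n),
    s ∈ Set.Ico (1 : ℝ) 2 ∧
    k.transpose * k = 1 ∧
    (∀ i : Fin n, (i : ℕ) < n - 1 → wd i ∈ Set.Ico (1 : ℝ) 2) ∧
    (∀ i : Fin n, (i : ℕ) = n - 1 →
      wd i = (∏ j ∈ Finset.filter (fun j : Fin n => (j : ℕ) < n - 1) Finset.univ, wd j)⁻¹) ∧
    (∀ i, y i i = 1) ∧ (∀ i j : Fin n, j < i → y i j = 0) ∧
    (∀ i j : Fin n, i < j → y i j ∈ Set.Ico (0 : ℝ) 1) ∧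
    a = s • (k * Matrix.diagonal wd * y)}

/-- The discrete set `P ⊆ GL_n(ℝ)`: matrices `2^λ • u` with `u` upper triangular,
`u_{ii} = 2^{κ_i}`, `u_{ij} = 2^{κ_j} μ_{ij}` for `i < j`, where `λ, κ_i, μ_{ij} ∈ ℤ`
and `κ₁ + ⋯ + κ_n = 0` (i.e. `κ_n = -(κ₁ + ⋯ + κ_{n-1})`). -/
def Pset (n : ℕ) : Set (Mn n) :=
  {p | ∃ (lam : ℤ) (κ : Fin n → ℤ) (μ : Fin n → Fin n → ℤ),
    (∑ i, κ i) = 0 ∧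
    p = (2 : ℝ) ^ lam • Matrix.of (fun i j : Fin n =>
      if i = j then (2 : ℝ) ^ (κ i)
      else if i < j then (2 : ℝ) ^ (κ j) * (μ i j : ℝ)
      else 0)}

/-- The enlarged tile `F_o`: as `F`, but with `s, w_i ∈ (1-ε, 2+ε)` and strict upper
entries of `y` in `(-ε, 1+ε)`. -/
def FoSet (n : ℕ) (ε : ℝ) : Set (Mn n) :=
  {a | ∃ (s : ℝ) (k : Mn n) (wd : Fin n → ℝ) (y : Mn n),
    s ∈ Set.Ioo (1 - ε) (2 + ε) ∧
    k.transpose * k = 1 ∧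
    (∀ i : Fin n, (i : ℕ) < n - 1 → wd i ∈ Set.Ioo (1 - ε) (2 + ε)) ∧
    (∀ i : Fin n, (i : ℕ) = n - 1 →
      wd i = (∏ j ∈ Finset.filter (fun j : Fin n => (j : ℕ) < n - 1) Finset.univ, wd j)⁻¹) ∧
    (∀ i, y i i = 1) ∧ (∀ i j : Fin n, j < i → y i j = 0) ∧
    (∀ i j : Fin n, i < j → y i j ∈ Set.Ioo (-ε) (1 + ε)) ∧
    a = s • (k * Matrix.diagonal wd * y)}

/-!
Gram–Schmidt applied to the columns of an invertible matrix `a` yields `a = g * y` with `g` having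
orthogonal columns and `y` unit upper triangular, and this is the only such factorization. Hence the
Iwasawa coordinates of `a` can be read off: `y` is `g⁻¹ * a`, while `|s|` is the geometric mean of
the norms of the columns of `g` (because the weights have product `1`) and `|wᵢ|` is the ratio of
the `i`-th norm to this mean. These are continuous in `a`, so open conditions on the coordinates cut
out an open subset of `GL_n(ℝ)`. On the other hand, the tile with closed parameter intervals is a
continuous image of a compact set, so it is closed and contains the closure of `F`.
-/

open Matrix InnerProductSpace
open scoped Pointwise Topology

section GramSchmidt

variable {𝕜 E ι : Type*} [RCLike 𝕜] [NormedAddCommGroup E] [InnerProductSpace 𝕜 E]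
  [LinearOrder ι] [LocallyFiniteOrderBot ι] [WellFoundedLT ι]

theorem inner_gramSchmidt_self (f : ι → E) (i : ι) :
    inner 𝕜 (gramSchmidt 𝕜 f i) (f i) = (‖gramSchmidt 𝕜 f i‖ : 𝕜) ^ 2 := by
  conv_lhs => rw [gramSchmidt_def'' 𝕜 f i]
  rw [inner_add_right, inner_self_eq_norm_sq_to_K, inner_sum, Finset.sum_eq_zero, add_zero]
  intro j hj
  rw [inner_smul_right, gramSchmidt_orthogonal 𝕜 f (Finset.mem_Iio.1 hj).ne', mul_zero]

theorem gramSchmidt_eq_of_sub_mem_span {f c : ι → E}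
    (hc : Pairwise fun i j => inner 𝕜 (c i) (c j) = 0)
    (hfc : ∀ j, f j - c j ∈ Submodule.span 𝕜 (c '' Set.Iio j)) : gramSchmidt 𝕜 f = c := by
  funext j
  induction j using WellFoundedLT.induction with
  | _ j ih =>
  let P : E →L[𝕜] E := ∑ i ∈ Finset.Iio j, (𝕜 ∙ c i).starProjection
  have projection_eq_zero {i k : ι} (hik : i ≠ k) : (𝕜 ∙ c i).starProjection (c k) = 0 := by
    rw [Submodule.starProjection_singleton, hc hik, zero_div, zero_smul]
  have hP_self : P (c j) = 0 := by
    rw [_root_.sum_apply]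
    exact Finset.sum_eq_zero fun i hi => projection_eq_zero (Finset.mem_Iio.1 hi).ne
  have hP_span : Set.EqOn P (ContinuousLinearMap.id 𝕜 E) (Submodule.span 𝕜 (c '' Set.Iio j)) := by
    refine ContinuousLinearMap.eqOn_closure_span (s := c '' Set.Iio j) ?_ |>.mono subset_closure
    rintro _ ⟨k, hk, rfl⟩
    rw [_root_.sum_apply, Finset.sum_eq_single_of_mem k (Finset.mem_Iio.2 hk)
      fun i _ hik => projection_eq_zero hik]
    exact Submodule.starProjection_eq_self_iff.2 (Submodule.mem_span_singleton_self _)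
  calc gramSchmidt 𝕜 f j = f j - P (f j) := by
        rw [gramSchmidt_def, _root_.sum_apply]
        refine congrArg _ (Finset.sum_congr rfl fun i hi => ?_)
        rw [ih i (Finset.mem_Iio.1 hi)]
    _ = f j - P (f j - c j) := by rw [map_sub, hP_self, sub_zero]
    _ = c j := by rw [hP_span (hfc j), ContinuousLinearMap.id_apply, sub_sub_cancel]

theorem continuousAt_gramSchmidt {f : ι → E} (hf : LinearIndependent 𝕜 f)
    (j : ι) : ContinuousAt (fun g : ι → E => gramSchmidt 𝕜 g j) f := by
  induction j using WellFoundedLT.induction with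
  | _ j ih =>
  simp only [gramSchmidt_def 𝕜 _ j, Submodule.starProjection_singleton]
  have eval_continuousAt : ContinuousAt (fun g : ι → E => g j) f := continuousAt_apply j f
  refine eval_continuousAt.sub (tendsto_finsetSum _ fun i hi => ?_)
  have hi := ih i (Finset.mem_Iio.1 hi)
  have norm_ne_zero : ((‖gramSchmidt 𝕜 f i‖ ^ 2 : ℝ) : 𝕜) ≠ 0 := by
    simpa using gramSchmidt_ne_zero i hf
  exact ((hi.inner eval_continuousAt).div
    (RCLike.continuous_ofReal.continuousAt.comp (hi.norm.pow 2)) norm_ne_zero).smul hi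

end GramSchmidt

section UnitUpperTriangular

variable (ι : Type*) [LinearOrder ι]

/-- Unit upper triangular real matrices with all strictly upper entries in `U`: the range of the
factor `y` in the Iwasawa decomposition. -/
def unitUpperTriangular (U : Set ℝ) : Set (Matrix ι ι ℝ) :=
  {y | (∀ i, y i i = 1) ∧ (∀ i j, j < i → y i j = 0) ∧ ∀ i j, i < j → y i j ∈ U}

variable {ι}

theorem unitUpperTriangular_mono {U V : Set ℝ} (h : U ⊆ V) :
    unitUpperTriangular ι U ⊆ unitUpperTriangular ι V :=
  fun _ ⟨diag, lower, upper⟩ => ⟨diag, lower, fun i j hij => h (upper i j hij)⟩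

theorem isCompact_unitUpperTriangular {U : Set ℝ} (hU : IsCompact U) :
    IsCompact (unitUpperTriangular ι U) := by
  have eq_pi : unitUpperTriangular ι U = Set.univ.pi fun i => Set.univ.pi fun j =>
      if i = j then {1} else if i < j then U else {0} := by
    refine Set.ext fun y => ⟨fun ⟨diag, lower, upper⟩ i _ j _ => ?_,
      fun h => ⟨fun i => ?_, fun i j hij => ?_, fun i j hij => ?_⟩⟩
    · rcases lt_trichotomy i j with hij | rfl | hij
      · simpa [hij.ne, hij] using upper i j hij
      · simpa using diag i
      · simpa [hij.ne', hij.not_gt] using lower i j hij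
    · simpa using h i trivial i trivial
    · simpa [hij.ne', hij.not_gt] using h i trivial j trivial
    · simpa [hij.ne, hij] using h i trivial j trivial
  rw [eq_pi]
  refine isCompact_univ_pi fun i => isCompact_univ_pi fun j => ?_
  split_ifs
  exacts [isCompact_singleton, hU, isCompact_singleton]

end UnitUpperTriangular

theorem isCompact_orthogonalGroup {ι : Type*} [Fintype ι] [DecidableEq ι] :
    IsCompact (orthogonalGroup ι ℝ : Set (Matrix ι ι ℝ)) := by
  have box_isCompact : IsCompact
      (Set.univ.pi fun _ => Set.univ.pi fun _ => Set.Icc (-1) 1 : Set (Matrix ι ι ℝ)) :=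
    isCompact_univ_pi fun _ => isCompact_univ_pi fun _ => isCompact_Icc
  refine box_isCompact.of_isClosed_subset
    (isClosed_unitary (R := Matrix ι ι ℝ)) fun k hk i _ j _ => ?_
  exact abs_le.1 (entry_norm_bound_of_unitary hk i j)

section MatrixGramSchmidt

variable {ι : Type*}

/-- The columns of a square matrix as Euclidean vectors. -/
def euclideanCol (a : Matrix ι ι ℝ) (j : ι) : EuclideanSpace ℝ ι :=
  WithLp.toLp 2 (a.col j)

theorem continuous_euclideanCol :
    Continuous (euclideanCol : Matrix ι ι ℝ → ι → EuclideanSpace ℝ ι) :=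
  continuous_pi fun j => (PiLp.continuous_toLp 2 _).comp
    (continuous_pi fun i => continuous_id.matrix_elem i j)

variable [Fintype ι]

theorem inner_euclideanCol (a b : Matrix ι ι ℝ) (i j : ι) :
    inner ℝ (euclideanCol a i) (euclideanCol b j) = (aᵀ * b) i j := by
  simp [euclideanCol, PiLp.inner_apply, Matrix.mul_apply, mul_comm]

theorem euclideanCol_mul (a b : Matrix ι ι ℝ) (j : ι) :
    euclideanCol (a * b) j = ∑ i, b i j • euclideanCol a i := by
  ext p
  simp [euclideanCol, Matrix.mul_apply, mul_comm]

theorem linearIndependent_euclideanCol [DecidableEq ι] {a : Matrix ι ι ℝ}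
    (ha : a.det ≠ 0) :
    LinearIndependent ℝ (euclideanCol a) :=
  (linearIndependent_cols_of_det_ne_zero ha).map'
    (WithLp.linearEquiv 2 ℝ (ι → ℝ)).symm.toLinearMap (LinearEquiv.ker _)

variable [LinearOrder ι] [LocallyFiniteOrderBot ι]

/-- The matrix whose columns are obtained from those of `a` by the Gram–Schmidt process, without
normalization. -/
def gramSchmidtMatrix (a : Matrix ι ι ℝ) : Matrix ι ι ℝ :=
  Matrix.of fun p i => gramSchmidt ℝ (euclideanCol a) i p

/-- The norm of the `i`-th Gram–Schmidt vector of the columns of `a`, which is the absolute value of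
the `i`-th diagonal coordinate of `a` in its Iwasawa decomposition. -/
def gramSchmidtNorm (a : Matrix ι ι ℝ) (i : ι) : ℝ :=
  ‖gramSchmidt ℝ (euclideanCol a) i‖

/-- The matrix `y` with `a = gramSchmidtMatrix a * y`, for invertible `a`. It is the unipotent
factor in the Iwasawa decomposition of `a`. -/
def gramSchmidtCoeff (a : Matrix ι ι ℝ) : Matrix ι ι ℝ :=
  (gramSchmidtMatrix a)⁻¹ * a

theorem euclideanCol_gramSchmidtMatrix (a : Matrix ι ι ℝ) :
    euclideanCol (gramSchmidtMatrix a) = gramSchmidt ℝ (euclideanCol a) :=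
  rfl

theorem gramSchmidtMatrix_eq_of_isDiag {c y : Matrix ι ι ℝ} (hc : (cᵀ * c).IsDiag)
    (hy : y ∈ unitUpperTriangular ι Set.univ) : gramSchmidtMatrix (c * y) = c := by
  obtain ⟨diag, lower, -⟩ := hy
  have gramSchmidt_eq : gramSchmidt ℝ (euclideanCol (c * y)) = euclideanCol c := by
    refine gramSchmidt_eq_of_sub_mem_span
      (fun i j hij => (inner_euclideanCol c c i j).trans (hc hij)) fun j => ?_
    rw [euclideanCol_mul, ← Finset.add_sum_erase _ _ (Finset.mem_univ j), diag, one_smul,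
      add_sub_cancel_left]
    refine Submodule.sum_mem _ fun i hi => ?_
    rcases (Finset.ne_of_mem_erase hi).lt_or_gt with hij | hji
    · exact Submodule.smul_mem _ _ (Submodule.subset_span ⟨i, hij, rfl⟩)
    · rw [lower i j hji, zero_smul]
      exact zero_mem _
  ext p i
  exact congrArg (fun v : ι → EuclideanSpace ℝ ι => v i p) gramSchmidt_eq

theorem transpose_gramSchmidtMatrix_mul_self (a : Matrix ι ι ℝ) :
    (gramSchmidtMatrix a)ᵀ * gramSchmidtMatrix a = diagonal fun i => gramSchmidtNorm a i ^ 2 := by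
  ext i j
  rw [← inner_euclideanCol, euclideanCol_gramSchmidtMatrix]
  obtain rfl | hij := eq_or_ne i j
  · rw [real_inner_self_eq_norm_sq, diagonal_apply_eq, gramSchmidtNorm]
  · rw [gramSchmidt_orthogonal ℝ _ hij, diagonal_apply_ne _ hij]

section Invertible

variable {a : Matrix ι ι ℝ} (ha : a.det ≠ 0)
include ha

theorem gramSchmidtNorm_pos (i : ι) : 0 < gramSchmidtNorm a i :=
  norm_pos_iff.2 (gramSchmidt_ne_zero i (linearIndependent_euclideanCol ha))

theorem diagonal_mul_transpose_mul_gramSchmidtMatrix :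
    (diagonal fun i => (gramSchmidtNorm a i ^ 2)⁻¹) * (gramSchmidtMatrix a)ᵀ *
      gramSchmidtMatrix a = 1 := by
  rw [mul_assoc, transpose_gramSchmidtMatrix_mul_self, diagonal_mul_diagonal, ← diagonal_one]
  exact congrArg _ (funext fun i => inv_mul_cancel₀ (pow_pos (gramSchmidtNorm_pos ha i) 2).ne')

theorem isUnit_det_gramSchmidtMatrix : IsUnit (gramSchmidtMatrix a).det :=
  isUnit_det_of_left_inverse (diagonal_mul_transpose_mul_gramSchmidtMatrix ha)

theorem gramSchmidtMatrix_mul_gramSchmidtCoeff : gramSchmidtMatrix a * gramSchmidtCoeff a = a :=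
  mul_nonsing_inv_cancel_left _ _ (isUnit_det_gramSchmidtMatrix ha)

theorem gramSchmidtCoeff_apply (i j : ι) :
    gramSchmidtCoeff a i j = (gramSchmidtNorm a i ^ 2)⁻¹ *
      inner ℝ (gramSchmidt ℝ (euclideanCol a) i) (euclideanCol a j) := by
  rw [gramSchmidtCoeff, inv_eq_left_inv (diagonal_mul_transpose_mul_gramSchmidtMatrix ha),
    mul_assoc, diagonal_mul, ← euclideanCol_gramSchmidtMatrix, inner_euclideanCol]

theorem gramSchmidtCoeff_mem_unitUpperTriangular_iff {U : Set ℝ} :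
    gramSchmidtCoeff a ∈ unitUpperTriangular ι U ↔ ∀ i j, i < j → gramSchmidtCoeff a i j ∈ U := by
  refine ⟨fun h => h.2.2, fun h => ⟨fun i => ?_, fun i j hji => ?_, h⟩⟩
  · rw [gramSchmidtCoeff_apply ha, inner_gramSchmidt_self]
    exact inv_mul_cancel₀ (pow_pos (gramSchmidtNorm_pos ha i) 2).ne'
  · rw [gramSchmidtCoeff_apply ha, gramSchmidt_inv_triangular ℝ _ hji, mul_zero]

theorem exists_orthogonal_mul_gramSchmidtCoeff {d : ι → ℝ} (hd : ∀ i, |d i| = gramSchmidtNorm a i) :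
    ∃ k ∈ orthogonalGroup ι ℝ, k * diagonal d * gramSchmidtCoeff a = a := by
  have d_ne_zero (i : ι) : d i ≠ 0 := abs_pos.1 (hd i ▸ gramSchmidtNorm_pos ha i)
  refine ⟨gramSchmidtMatrix a * diagonal d⁻¹, (mem_orthogonalGroup_iff' _ _).2 ?_, ?_⟩
  · rw [transpose_mul, diagonal_transpose, mul_assoc, ← mul_assoc _ᵀ,
      transpose_gramSchmidtMatrix_mul_self, diagonal_mul_diagonal, diagonal_mul_diagonal,
      ← diagonal_one]
    refine congrArg _ (funext fun i => ?_)
    rw [← hd, sq_abs, Pi.inv_apply]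
    field_simp [d_ne_zero i]
  · have inv_mul : diagonal d⁻¹ * diagonal d = 1 := by
      rw [diagonal_mul_diagonal, ← diagonal_one]
      exact congrArg _ (funext fun i => inv_mul_cancel₀ (d_ne_zero i))
    rw [mul_assoc (gramSchmidtMatrix a), inv_mul, mul_one,
      gramSchmidtMatrix_mul_gramSchmidtCoeff ha]

theorem continuousAt_gramSchmidt_euclideanCol (i : ι) :
    ContinuousAt (fun b => gramSchmidt ℝ (euclideanCol b) i) a := by
  have cols_linearIndependent := linearIndependent_euclideanCol ha
  exact ContinuousAt.comp (f := euclideanCol)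
    (g := fun f : ι → EuclideanSpace ℝ ι => gramSchmidt ℝ f i)
    (continuousAt_gramSchmidt cols_linearIndependent i) continuous_euclideanCol.continuousAt

theorem continuousAt_gramSchmidtNorm (i : ι) : ContinuousAt (fun b => gramSchmidtNorm b i) a :=
  (continuousAt_gramSchmidt_euclideanCol ha i).norm

theorem continuousAt_gramSchmidtCoeff (i j : ι) :
    ContinuousAt (fun b => gramSchmidtCoeff b i j) a := by
  have col_continuousAt : ContinuousAt (fun b => euclideanCol b j) a :=
    ((continuous_apply j).comp continuous_euclideanCol).continuousAt
  have det_ne_zero : ∀ᶠ b in 𝓝 a, b.det ≠ 0 :=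
    (continuous_id.matrix_det.continuousAt (x := a)).eventually_ne ha
  refine ContinuousAt.congr ?_
    (det_ne_zero.mono fun b hb => (gramSchmidtCoeff_apply hb i j).symm)
  exact (((continuousAt_gramSchmidtNorm ha i).pow 2).inv₀
    (pow_pos (gramSchmidtNorm_pos ha i) 2).ne').mul
      ((continuousAt_gramSchmidt_euclideanCol ha i).inner col_continuousAt)

end Invertible

theorem gramSchmidt_coordinates_of_orthogonal_mul {k y : Matrix ι ι ℝ} {d : ι → ℝ}
    (hk : k ∈ orthogonalGroup ι ℝ) (hy : y ∈ unitUpperTriangular ι Set.univ)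
    (ha : (k * diagonal d * y).det ≠ 0) :
    (∀ i, |d i| = gramSchmidtNorm (k * diagonal d * y) i) ∧
      gramSchmidtCoeff (k * diagonal d * y) = y := by
  have gram_eq : (k * diagonal d)ᵀ * (k * diagonal d) = diagonal fun i => d i ^ 2 := by
    rw [transpose_mul, mul_assoc, ← mul_assoc kᵀ, (mem_orthogonalGroup_iff' _ _).1 hk, one_mul,
      diagonal_transpose, diagonal_mul_diagonal]
    simp only [sq]
  have matrix_eq := gramSchmidtMatrix_eq_of_isDiag (gram_eq ▸ isDiag_diagonal _) hy
  constructor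
  · have norm_sq := transpose_gramSchmidtMatrix_mul_self (k * diagonal d * y)
    rw [matrix_eq, gram_eq] at norm_sq
    intro i
    rw [← abs_of_pos (gramSchmidtNorm_pos ha i), ← sq_eq_sq_iff_abs_eq_abs]
    exact congrFun (diagonal_injective norm_sq) i
  · have isUnit_det := isUnit_det_gramSchmidtMatrix ha
    rw [matrix_eq] at isUnit_det
    rw [gramSchmidtCoeff, matrix_eq, nonsing_inv_mul_cancel_left _ _ isUnit_det]

end MatrixGramSchmidt

section DetOneWeights

variable {m : ℕ}

/-- The diagonal `(u₀, …, uₘ₋₁, (u₀ ⋯ uₘ₋₁)⁻¹)` of the factor `w` in the Iwasawa decomposition. -/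
def detOneWeights (u : Fin m → ℝ) : Fin (m + 1) → ℝ :=
  Fin.snoc u (∏ i, u i)⁻¹

@[simp]
theorem detOneWeights_castSucc (u : Fin m → ℝ) (i : Fin m) :
    detOneWeights u i.castSucc = u i :=
  Fin.snoc_castSucc ..

@[simp]
theorem detOneWeights_last (u : Fin m → ℝ) : detOneWeights u (Fin.last m) = (∏ i, u i)⁻¹ :=
  Fin.snoc_last ..

theorem continuousOn_detOneWeights :
    ContinuousOn (detOneWeights : (Fin m → ℝ) → Fin (m + 1) → ℝ) {u | ∀ i, u i ≠ 0} := by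
  have prod_continuousOn : ContinuousOn (fun u : Fin m → ℝ => ∏ i, u i) {u | ∀ i, u i ≠ 0} := by
    fun_prop
  exact ContinuousOn.finSnoc (X := fun _ => ℝ) continuousOn_id (prod_continuousOn.inv₀ fun u hu =>
    Finset.prod_ne_zero_iff.2 fun i _ => hu i)

theorem eq_detOneWeights_iff {w : Fin (m + 1) → ℝ} {u : Fin m → ℝ} :
    w = detOneWeights u ↔
      (∀ i : Fin m, w i.castSucc = u i) ∧ w (Fin.last m) = (∏ i, u i)⁻¹ := by
  simp only [funext_iff, Fin.forall_fin_succ', detOneWeights_castSucc, detOneWeights_last]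

/-- The geometric mean of `N₀, …, Nₘ`, the common scale `|s|` of a family `Nᵢ = |s * wᵢ|` whose
weights `wᵢ` have product `1`. -/
def geometricMean (N : Fin (m + 1) → ℝ) : ℝ :=
  (∏ i, N i) ^ ((m + 1 : ℕ) : ℝ)⁻¹

section Positive

variable {N : Fin (m + 1) → ℝ} (hN : ∀ i, 0 < N i)
include hN

theorem geometricMean_pos : 0 < geometricMean N :=
  Real.rpow_pos_of_pos (Finset.prod_pos fun i _ => hN i) _

theorem geometricMean_pow : geometricMean N ^ (m + 1) = ∏ i, N i :=
  Real.rpow_inv_natCast_pow (Finset.prod_nonneg fun i _ => (hN i).le) m.succ_ne_zero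

theorem abs_mul_detOneWeights_eq_iff {s : ℝ} {u : Fin m → ℝ} :
    (∀ i, |s * detOneWeights u i| = N i) ↔
      |s| = geometricMean N ∧ ∀ i : Fin m, |u i| = N i.castSucc / geometricMean N := by
  have mean_pos := geometricMean_pos hN
  constructor
  · intro h
    have weight_ne_zero (i) : detOneWeights u i ≠ 0 := by
      have := hN i
      rw [← h, abs_pos] at this
      exact right_ne_zero_of_mul this
    have prod_weights : ∏ i, detOneWeights u i = 1 := by
      have := weight_ne_zero (Fin.last m)
      rw [detOneWeights_last, ne_eq, inv_eq_zero] at this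
      rw [Fin.prod_univ_castSucc, detOneWeights_last]
      simpa only [detOneWeights_castSucc] using mul_inv_cancel₀ this
    have abs_s : |s| = geometricMean N := by
      refine (pow_left_inj₀ (abs_nonneg s) mean_pos.le m.succ_ne_zero).1 ?_
      rw [geometricMean_pow hN, ← Finset.prod_congr rfl fun i _ => h i, ← Finset.abs_prod,
        Finset.prod_mul_distrib, prod_weights, mul_one, Finset.prod_const, Finset.card_univ,
        Fintype.card_fin, abs_pow]
    refine ⟨abs_s, fun i => ?_⟩
    rw [eq_div_iff mean_pos.ne', ← h, detOneWeights_castSucc, abs_mul, abs_s, mul_comm]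
  · rintro ⟨abs_s, abs_u⟩ i
    rw [abs_mul, abs_s]
    refine Fin.lastCases ?_ (fun i => ?_) i
    · have init_pos : 0 < ∏ i : Fin m, N i.castSucc := Finset.prod_pos fun i _ => hN _
      have pow_eq := geometricMean_pow hN
      rw [Fin.prod_univ_castSucc, pow_succ] at pow_eq
      rw [detOneWeights_last, abs_inv, Finset.abs_prod, Finset.prod_congr rfl fun i _ => abs_u i,
        Finset.prod_div_distrib, Finset.prod_const, Finset.card_univ, Fintype.card_fin, inv_div,
        mul_div_assoc', div_eq_iff init_pos.ne', mul_comm, pow_eq, mul_comm]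
    · rw [detOneWeights_castSucc, abs_u, mul_div_cancel₀ _ mean_pos.ne']

end Positive

end DetOneWeights

section IwasawaTile

variable {m : ℕ} {S T W X U V : Set ℝ}

/-- The matrices `s • (k * w * y)` with `s ∈ S`, `k` orthogonal, all but the last of the weights `w`
in `W`, and the strictly upper entries of `y` in `U`. The tiles `F` and `F_o` and the compact tile
between them are all of this form; the matrix size is `m + 1`. -/
def iwasawaTile (m : ℕ) (S W U : Set ℝ) : Set (Mn (m + 1)) :=
  {a | ∃ s ∈ S, ∃ k ∈ orthogonalGroup (Fin (m + 1)) ℝ, ∃ u ∈ Set.univ.pi fun _ : Fin m => W,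
    ∃ y ∈ unitUpperTriangular (Fin (m + 1)) U, a = s • (k * diagonal (detOneWeights u) * y)}

theorem iwasawaTile_mono (hS : S ⊆ T) (hW : W ⊆ X) (hU : U ⊆ V) :
    iwasawaTile m S W U ⊆ iwasawaTile m T X V :=
  fun _ ⟨s, hs, k, hk, u, hu, y, hy, h⟩ => ⟨s, hS hs, k, hk, u,
    Set.pi_mono (fun _ _ => hW) hu, y, unitUpperTriangular_mono hU hy, h⟩

theorem isCompact_iwasawaTile (hS : IsCompact S) (hW : IsCompact W) (hW₀ : 0 ∉ W)
    (hU : IsCompact U) : IsCompact (iwasawaTile m S W U) := by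
  have weights_isCompact : IsCompact (detOneWeights '' Set.univ.pi fun _ : Fin m => W) :=
    (isCompact_univ_pi fun _ => hW).image_of_continuousOn <| continuousOn_detOneWeights.mono
      fun _ hu i => ne_of_mem_of_not_mem (hu i trivial) hW₀
  have product_continuous : Continuous
      fun p : ℝ × Mn (m + 1) × (Fin (m + 1) → ℝ) × Mn (m + 1) =>
        p.1 • (p.2.1 * diagonal p.2.2.1 * p.2.2.2) := by
    fun_prop
  convert (hS.prod (isCompact_orthogonalGroup.prod
    (weights_isCompact.prod (isCompact_unitUpperTriangular hU)))).image product_continuous using 1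
  ext a
  constructor
  · rintro ⟨s, hs, k, hk, u, hu, y, hy, rfl⟩
    exact ⟨(s, k, detOneWeights u, y), ⟨hs, hk, ⟨u, hu, rfl⟩, hy⟩, rfl⟩
  · rintro ⟨⟨s, k, _, y⟩, ⟨hs, hk, ⟨u, hu, rfl⟩, hy⟩, rfl⟩
    exact ⟨s, hs, k, hk, u, hu, y, hy, rfl⟩

theorem mem_union_neg_iff_exists_abs_eq {x : ℝ} (hx : 0 ≤ x) :
    x ∈ S ∪ -S ↔ ∃ t ∈ S, |t| = x := by
  simp only [abs_eq hx, and_or_left, exists_or, exists_eq_right, Set.mem_union, Set.mem_neg]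

theorem mem_iwasawaTile_iff_exists_abs {a : Mn (m + 1)} (ha : a.det ≠ 0) :
    a ∈ iwasawaTile m S W U ↔
      (∃ s ∈ S, ∃ u ∈ Set.univ.pi fun _ : Fin m => W,
        ∀ i, |s * detOneWeights u i| = gramSchmidtNorm a i) ∧
      ∀ i j, i < j → gramSchmidtCoeff a i j ∈ U := by
  have smul_eq (s : ℝ) (k y : Mn (m + 1)) (u : Fin m → ℝ) :
      s • (k * diagonal (detOneWeights u) * y) =
        k * diagonal (fun i => s * detOneWeights u i) * y := by
    rw [← Matrix.smul_mul, ← Matrix.mul_smul, ← diagonal_smul]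
    rfl
  constructor
  · rintro ⟨s, hs, k, hk, u, hu, y, hy, rfl⟩
    rw [smul_eq] at ha ⊢
    obtain ⟨norm_eq, coeff_eq⟩ := gramSchmidt_coordinates_of_orthogonal_mul hk
      (unitUpperTriangular_mono (Set.subset_univ U) hy) ha
    exact ⟨⟨s, hs, u, hu, norm_eq⟩, coeff_eq.symm ▸ hy.2.2⟩
  · rintro ⟨⟨s, hs, u, hu, norm_eq⟩, coeff_mem⟩
    obtain ⟨k, hk, product_eq⟩ := exists_orthogonal_mul_gramSchmidtCoeff ha norm_eq
    exact ⟨s, hs, k, hk, u, hu, gramSchmidtCoeff a,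
      (gramSchmidtCoeff_mem_unitUpperTriangular_iff ha).2 coeff_mem,
      product_eq.symm.trans (smul_eq ..).symm⟩

theorem mem_iwasawaTile_iff {a : Mn (m + 1)} (ha : a.det ≠ 0) :
    a ∈ iwasawaTile m S W U ↔
      geometricMean (gramSchmidtNorm a) ∈ S ∪ -S ∧
      (∀ i : Fin m,
        gramSchmidtNorm a i.castSucc / geometricMean (gramSchmidtNorm a) ∈ W ∪ -W) ∧
      ∀ i j, i < j → gramSchmidtCoeff a i j ∈ U := by
  have norm_pos := gramSchmidtNorm_pos ha
  have mean_pos := geometricMean_pos norm_pos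
  rw [mem_iwasawaTile_iff_exists_abs ha, mem_union_neg_iff_exists_abs_eq mean_pos.le,
    ← and_assoc]
  simp only [abs_mul_detOneWeights_eq_iff norm_pos, Set.mem_pi, Set.mem_univ, true_imp_iff,
    mem_union_neg_iff_exists_abs_eq (div_nonneg (norm_pos _).le mean_pos.le), Classical.skolem,
    forall_and]
  refine and_congr_left fun _ => ?_
  constructor
  · rintro ⟨s, hs, u, hu, abs_s, abs_u⟩
    exact ⟨⟨s, hs, abs_s⟩, u, hu, abs_u⟩
  · rintro ⟨⟨s, hs, abs_s⟩, u, hu, abs_u⟩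
    exact ⟨s, hs, u, hu, abs_s, abs_u⟩

theorem isOpen_iwasawaTile (hS : IsOpen S) (hW : IsOpen W) (hU : IsOpen U) :
    IsOpen {a : {a : Mn (m + 1) // a.det ≠ 0} | (a : Mn (m + 1)) ∈ iwasawaTile m S W U} := by
  have norm_continuous (i : Fin (m + 1)) : Continuous fun a : {a : Mn (m + 1) // a.det ≠ 0} =>
      gramSchmidtNorm (a : Mn (m + 1)) i :=
    continuous_iff_continuousAt.2 fun a =>
      (continuousAt_gramSchmidtNorm a.2 i).comp continuous_subtype_val.continuousAt
  have coeff_continuous (i j : Fin (m + 1)) : Continuous fun a : {a : Mn (m + 1) // a.det ≠ 0} =>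
      gramSchmidtCoeff (a : Mn (m + 1)) i j :=
    continuous_iff_continuousAt.2 fun a =>
      (continuousAt_gramSchmidtCoeff a.2 i j).comp continuous_subtype_val.continuousAt
  have mean_continuous : Continuous fun a : {a : Mn (m + 1) // a.det ≠ 0} =>
      geometricMean (gramSchmidtNorm (a : Mn (m + 1))) :=
    (continuous_finsetProd _ fun i _ => norm_continuous i).rpow_const
      fun _ => Or.inr (by positivity)
  simp only [fun a : {a : Mn (m + 1) // a.det ≠ 0} =>
    mem_iwasawaTile_iff (S := S) (W := W) (U := U) a.2, Set.ofPred_and, Set.ofPred_forall]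
  refine ((hS.union hS.neg).preimage mean_continuous).inter (.inter ?_ ?_)
  · exact isOpen_iInter_of_finite fun i => (hW.union hW.neg).preimage <|
      (norm_continuous _).div mean_continuous fun a =>
        (geometricMean_pos (gramSchmidtNorm_pos a.2)).ne'
  · exact isOpen_iInter_of_finite fun i => isOpen_iInter_of_finite fun j =>
      isOpen_iInter_of_finite fun _ => hU.preimage (coeff_continuous i j)

theorem exists_mem_pi_eq_detOneWeights_iff {w : Fin (m + 1) → ℝ} :
    (∃ u ∈ Set.univ.pi fun _ : Fin m => W, w = detOneWeights u) ↔
      (∀ i : Fin (m + 1), (i : ℕ) < m + 1 - 1 → w i ∈ W) ∧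
      ∀ i : Fin (m + 1), (i : ℕ) = m + 1 - 1 →
        w i = (∏ j ∈ Finset.filter (fun j : Fin (m + 1) => (j : ℕ) < m + 1 - 1) Finset.univ,
          w j)⁻¹ := by
  have prod_init : ∏ j ∈ Finset.filter (fun j : Fin (m + 1) => (j : ℕ) < m) Finset.univ, w j =
      ∏ j : Fin m, w j.castSucc := by
    simp [Finset.prod_filter, Fin.prod_univ_castSucc]
  simp only [add_tsub_cancel_right, prod_init, Fin.forall_fin_succ', Fin.val_castSucc, Fin.is_lt,
    Fin.val_last, lt_irrefl, Nat.ne_of_lt, true_imp_iff, false_imp_iff, and_true,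
    true_and, implies_true, eq_detOneWeights_iff]
  constructor
  · rintro ⟨u, hu, w_init, w_last⟩
    simp only [w_init, w_last]
    exact ⟨fun i => hu i trivial, trivial⟩
  · rintro ⟨w_mem, w_last⟩
    exact ⟨fun i => w i.castSucc, fun i _ => w_mem i, fun _ => rfl, w_last⟩

theorem mem_iwasawaTile_iff_exists_weights {a : Mn (m + 1)} :
    a ∈ iwasawaTile m S W U ↔ ∃ (s : ℝ) (k : Mn (m + 1)) (w : Fin (m + 1) → ℝ) (y : Mn (m + 1)),
      s ∈ S ∧ k.transpose * k = 1 ∧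
      (∀ i : Fin (m + 1), (i : ℕ) < m + 1 - 1 → w i ∈ W) ∧
      (∀ i : Fin (m + 1), (i : ℕ) = m + 1 - 1 →
        w i = (∏ j ∈ Finset.filter (fun j : Fin (m + 1) => (j : ℕ) < m + 1 - 1) Finset.univ,
          w j)⁻¹) ∧
      (∀ i, y i i = 1) ∧ (∀ i j, j < i → y i j = 0) ∧ (∀ i j, i < j → y i j ∈ U) ∧
      a = s • (k * diagonal w * y) := by
  constructor
  · rintro ⟨s, hs, k, hk, u, hu, y, ⟨diag, lower, upper⟩, h⟩
    obtain ⟨w_mem, w_last⟩ := exists_mem_pi_eq_detOneWeights_iff.1 ⟨u, hu, rfl⟩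
    exact ⟨s, k, _, y, hs, (mem_orthogonalGroup_iff' _ _).1 hk, w_mem, w_last, diag, lower, upper,
      h⟩
  · rintro ⟨s, k, w, y, hs, hk, w_mem, w_last, diag, lower, upper, h⟩
    obtain ⟨u, hu, rfl⟩ := exists_mem_pi_eq_detOneWeights_iff.2 ⟨w_mem, w_last⟩
    exact ⟨s, hs, k, (mem_orthogonalGroup_iff' _ _).2 hk, u, hu, y, ⟨diag, lower, upper⟩, h⟩

theorem Fset_eq_iwasawaTile :
    Fset (m + 1) = iwasawaTile m (Set.Ico 1 2) (Set.Ico 1 2) (Set.Ico 0 1) :=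
  Set.ext fun _ => mem_iwasawaTile_iff_exists_weights.symm

theorem FoSet_eq_iwasawaTile (ε : ℝ) :
    FoSet (m + 1) ε = iwasawaTile m (Set.Ioo (1 - ε) (2 + ε)) (Set.Ioo (1 - ε) (2 + ε))
      (Set.Ioo (-ε) (1 + ε)) :=
  Set.ext fun _ => mem_iwasawaTile_iff_exists_weights.symm

end IwasawaTile

/-- For every `ε > 0`, the set `F_o` is open in `GL_n(ℝ)` (with the
subspace topology from `M_n(ℝ) ≅ ℝ^{n²}`), and the closure of `F` is contained in
`F_o`. -/
theorem stmt_14 (n : ℕ) (hn : 1 ≤ n) (ε : ℝ) (hε : 0 < ε) :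
    IsOpen {a : {m : Mn n // m.det ≠ 0} | (a : Mn n) ∈ FoSet n ε} ∧
    closure (Fset n) ⊆ FoSet n ε := by
  obtain ⟨m, rfl⟩ := Nat.exists_eq_add_of_le' hn
  rw [FoSet_eq_iwasawaTile, Fset_eq_iwasawaTile]
  refine ⟨isOpen_iwasawaTile isOpen_Ioo isOpen_Ioo isOpen_Ioo, ?_⟩
  have compactTile_isClosed :
      IsClosed (iwasawaTile m (Set.Icc 1 2) (Set.Icc 1 2) (Set.Icc 0 1)) :=
    (isCompact_iwasawaTile isCompact_Icc isCompact_Icc (by norm_num) isCompact_Icc).isClosed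
  have Icc_one_two_subset : Set.Icc 1 2 ⊆ Set.Ioo (1 - ε) (2 + ε) :=
    Set.Icc_subset_Ioo (by linarith) (by linarith)
  have Icc_zero_one_subset : Set.Icc 0 1 ⊆ Set.Ioo (-ε) (1 + ε) :=
    Set.Icc_subset_Ioo (by linarith) (by linarith)
  exact (closure_minimal (iwasawaTile_mono Set.Ico_subset_Icc_self Set.Ico_subset_Icc_self
    Set.Ico_subset_Icc_self) compactTile_isClosed).trans
      (iwasawaTile_mono Icc_one_two_subset Icc_one_two_subset Icc_zero_one_subset)
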